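/- Assume p_1,…,p_m are positive rational numbers. Let 𝒮 ⊆ ℝ^{D_1}, with D_1 = ∑_{i,j} |𝒜_{ij}| d_i n_j, be the set of matrix tuples V with (V,p) feasible. Then there exists a semi-algebraic set 𝒴 ⊆ ℝ^{D_1} × ℝ^{D_1} such that for every (V, V') ∈ 𝒴 one has cap(V, p) = cap(V', p) and (V', p) is extremizable, and such that 𝒮 = π_1(𝒴), where π_1 : ℝ^{D_1} × ℝ^{D_1} → ℝ^{D_1} is projection onto the first factor. -/

import Mathlib

open Matrix BigOperators

/-- The value of the capacity functional of a quiver datum `(V, p)` at a tuple `Y`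
of `n j × n j` matrices. -/
noncomputable def capVal {k m : ℕ} {d : Fin k → ℕ} {n : Fin m → ℕ} {A : Fin k → Fin m → ℕ}
    (p : Fin m → ℝ)
    (V : ∀ i : Fin k, ∀ j : Fin m, Fin (A i j) → Matrix (Fin (n j)) (Fin (d i)) ℝ)
    (Y : ∀ j : Fin m, Matrix (Fin (n j)) (Fin (n j)) ℝ) : ℝ :=
  (∏ i : Fin k, (∑ j : Fin m, p j • ∑ a : Fin (A i j), (V i j a)ᵀ * Y j * V i j a).det) /
    ∏ j : Fin m, (Y j).det ^ (p j)

/-- The capacity `cap(V, p)` of a quiver datum: the infimum of the capacity functional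
over all tuples of positive definite matrices. -/
noncomputable def cap {k m : ℕ} {d : Fin k → ℕ} {n : Fin m → ℕ} {A : Fin k → Fin m → ℕ}
    (p : Fin m → ℝ)
    (V : ∀ i : Fin k, ∀ j : Fin m, Fin (A i j) → Matrix (Fin (n j)) (Fin (d i)) ℝ) : ℝ :=
  sInf { r : ℝ | ∃ Y : ∀ j : Fin m, Matrix (Fin (n j)) (Fin (n j)) ℝ,
    (∀ j, (Y j).PosDef) ∧ r = capVal p V Y }

/-- A quiver datum `(V, p)` is extremizable if it is feasible (`cap(V,p) > 0`) and the
infimum defining the capacity is attained at some tuple of positive definite matrices. -/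
def Extremizable {k m : ℕ} {d : Fin k → ℕ} {n : Fin m → ℕ} {A : Fin k → Fin m → ℕ}
    (p : Fin m → ℝ)
    (V : ∀ i : Fin k, ∀ j : Fin m, Fin (A i j) → Matrix (Fin (n j)) (Fin (d i)) ℝ) : Prop :=
  0 < cap p V ∧ ∃ Y : ∀ j : Fin m, Matrix (Fin (n j)) (Fin (n j)) ℝ,
    (∀ j, (Y j).PosDef) ∧ capVal p V Y = cap p V

/-- A quiver datum `(V, p)` is geometric. -/
def IsGeometric {k m : ℕ} {d : Fin k → ℕ} {n : Fin m → ℕ} {A : Fin k → Fin m → ℕ}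
    (p : Fin m → ℝ)
    (V : ∀ i : Fin k, ∀ j : Fin m, Fin (A i j) → Matrix (Fin (n j)) (Fin (d i)) ℝ) : Prop :=
  (∀ i, ∑ j : Fin m, p j • ∑ a : Fin (A i j), (V i j a)ᵀ * V i j a = 1) ∧
  (∀ j, ∑ i : Fin k, ∑ a : Fin (A i j), V i j a * (V i j a)ᵀ = 1)

/-- The index set of coordinates on the space `ℝ^{D₁}` of matrix tuples,
`D₁ = ∑_{i,j} |𝒜_{ij}| d_i n_j`. -/
abbrev QIdx (k m : ℕ) (d : Fin k → ℕ) (n : Fin m → ℕ) (A : Fin k → Fin m → ℕ) : Type :=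
  (i : Fin k) × (j : Fin m) × (Fin (A i j) × Fin (n j) × Fin (d i))

/-- Reassemble a point of `ℝ^{D₁}` into a tuple of matrices (a quiver datum). -/
def toDatum {k m : ℕ} {d : Fin k → ℕ} {n : Fin m → ℕ} {A : Fin k → Fin m → ℕ}
    (x : QIdx k m d n A → ℝ) :
    ∀ i : Fin k, ∀ j : Fin m, Fin (A i j) → Matrix (Fin (n j)) (Fin (d i)) ℝ :=
  fun i j a => Matrix.of fun r c => x ⟨i, j, a, r, c⟩

/-- A subset of `ℝ^ι` (`ι` finite) is semi-algebraic if it is a finite union of sets, each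
defined by finitely many polynomial equalities and finitely many strict polynomial
inequalities. -/
def IsSemialgebraic {ι : Type} [Fintype ι] (S : Set (ι → ℝ)) : Prop :=
  ∃ (N M : ℕ) (P : Fin N → Fin M → MvPolynomial ι ℝ) (isEq : Fin N → Fin M → Bool),
    S = ⋃ t : Fin N, { x | ∀ l : Fin M,
      if isEq t l then MvPolynomial.eval x (P t l) = 0
      else 0 < MvPolynomial.eval x (P t l) }

/-!
The set `𝒴` of all pairs `(V, V')` with `cap V = cap V'` and `V'` extremizable is semialgebraic,
because both conditions are first order over the field of real numbers: positive definite matrices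
are `hᵀ h` with `h` invertible, and rational powers are defined by polynomial equations.
Quantifiers are eliminated by following the signs of finitely many polynomials along one variable.
Their arrangement on the line is determined, up to an order automorphism, by the signs of finitely
many polynomials in the remaining variables. This goes by induction on the degree: between the
roots of its derivative a polynomial is monotone, and its signs at these roots are those of
remainders of smaller degree.

The feasible set is the whole projection of `𝒴` once every feasible `V` has the same capacity as
some extremizable `V'`. By a change of variables `V` may be normalized so that `Y = 1` is mapped to
the identity, so that the capacity functional is `1` there. Normalized data form a compact set,
on which the upper semicontinuous capacity attains its maximum. If the capacity functional of a
maximizer took a value below `1`, say at `Y`, then normalizing at `Y` would increase the capacity.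
Hence the maximizer is extremizable with capacity `1`, and scaling it yields every positive
capacity.
-/

open SignType (sign)

section OrderIso

/-! ### Order automorphisms of the line matching signs -/

private lemma exists_orderIso_apply_eq_of_le {a b u v : ℝ} (hau : a < u) (huv : u ≤ v)
    (hvb : v < b) : ∃ ψ : ℝ ≃o ℝ, ψ u = v ∧ ∀ t ∉ Set.Ioo a b, ψ t = t := by
  have one_le : 1 ≤ (v - a) / (u - a) := by rw [le_div_iff₀ (by linarith)]; linarith
  have pos : 0 < (b - v) / (b - u) := by apply div_pos <;> linarith
  have le_one : (b - v) / (b - u) ≤ 1 := by rw [div_le_one (by linarith)]; linarith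
  -- Inside `(a, b)` this is the piecewise linear map through `(a, a)`, `(u, v)` and `(b, b)`.
  let f : ℝ → ℝ := fun t =>
    max t (min (a + (t - a) * ((v - a) / (u - a))) (b - (b - t) * ((b - v) / (b - u))))
  have mono : StrictMono f := fun x y hxy =>
    max_lt_max hxy (min_lt_min (by nlinarith) (by nlinarith))
  have fixes : ∀ t ∉ Set.Ioo a b, f t = t := by
    intro t ht
    refine max_eq_left ?_
    rcases le_or_gt t a with h | h
    · exact min_le_of_left_le (by nlinarith)
    · exact min_le_of_right_le (by nlinarith [not_lt.1 fun h' => ht ⟨h, h'⟩])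
  have surj : Function.Surjective f := by
    refine Continuous.surjective (by fun_prop)
      (Filter.tendsto_atTop_mono (fun t => le_max_left _ _) Filter.tendsto_id) ?_
    refine Filter.tendsto_id.congr' ?_
    filter_upwards [Filter.eventually_le_atBot a] with t ht
    exact (fixes t fun h => h.1.not_ge ht).symm
  refine ⟨mono.orderIsoOfSurjective f surj, ?_, fixes⟩
  have left : a + (u - a) * ((v - a) / (u - a)) = v := by
    rw [mul_div_cancel₀ _ (by linarith)]; ring
  have right : b - (b - u) * ((b - v) / (b - u)) = v := by
    rw [mul_div_cancel₀ _ (by linarith)]; ring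
  change max u (min _ _) = v
  rw [left, right, min_self, max_eq_right huv]

lemma exists_orderIso_apply_eq {a b u v : ℝ} (hu : u ∈ Set.Ioo a b) (hv : v ∈ Set.Ioo a b) :
    ∃ ψ : ℝ ≃o ℝ, ψ u = v ∧ ∀ t ∉ Set.Ioo a b, ψ t = t := by
  rcases le_total u v with h | h
  · exact exists_orderIso_apply_eq_of_le hu.1 h hv.2
  · obtain ⟨ψ, rfl, fixes⟩ := exists_orderIso_apply_eq_of_le hv.1 h hu.2
    exact ⟨ψ.symm, ψ.symm_apply_apply v, fun t ht => (ψ.symm_apply_eq).2 (fixes t ht).symm⟩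

lemma sign_eq_of_forall_uIcc_ne_zero {g : ℝ → ℝ} (hg : Continuous g) {a b : ℝ}
    (h : ∀ u ∈ Set.uIcc a b, g u ≠ 0) : sign (g a) = sign (g b) := by
  have avoid : (0 : ℝ) ∉ Set.uIcc (g a) (g b) := fun h0 => by
    obtain ⟨u, hu, hu0⟩ := intermediate_value_uIcc hg.continuousOn h0
    exact h u hu hu0
  rw [Set.mem_uIcc] at avoid
  push Not at avoid
  rcases (h a Set.left_mem_uIcc).lt_or_gt with ha | ha
  · rw [sign_neg ha, sign_neg (avoid.1 ha.le)]
  · rw [sign_pos ha, sign_pos (not_le.1 fun hb => (avoid.2 hb).not_ge ha.le)]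

lemma sign_apply_orderIso_of_forall_zero_fixed {g : ℝ → ℝ} (hg : Continuous g) (ψ : ℝ ≃o ℝ)
    (h : ∀ u, g u = 0 → ψ u = u) (t : ℝ) : sign (g (ψ t)) = sign (g t) := by
  by_cases ht : ψ t = t
  · rw [ht]
  refine (sign_eq_of_forall_uIcc_ne_zero hg fun u hu hu0 => ht ?_).symm
  have hfix := h u hu0
  have hut : u = t := by
    rcases Set.mem_uIcc.1 hu with ⟨h1, h2⟩ | ⟨h1, h2⟩
    · exact le_antisymm (ψ.le_iff_le.1 (hfix.le.trans h2)) h1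
    · exact le_antisymm h2 (ψ.le_iff_le.1 (h1.trans hfix.ge))
  exact hut ▸ hfix

/-- Both functions are strictly increasing, or both are strictly decreasing, on the set `s`. -/
def StrictCoMonotoneOn (F G : ℝ → ℝ) (s : Set ℝ) : Prop :=
  StrictMonoOn F s ∧ StrictMonoOn G s ∨ StrictAntiOn F s ∧ StrictAntiOn G s

lemma sign_eq_sign_sub_of_strictMonoOn {F : ℝ → ℝ} {s : Set ℝ} (hF : StrictMonoOn F s)
    {r t : ℝ} (hr : r ∈ s) (h0 : F r = 0) (ht : t ∈ s) : sign (F t) = sign (t - r) := by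
  rcases lt_trichotomy t r with h | rfl | h
  · rw [sign_neg (sub_neg.2 h), sign_neg (h0 ▸ hF ht hr h)]
  · rw [h0, sub_self]
  · rw [sign_pos (sub_pos.2 h), sign_pos (h0 ▸ hF hr ht h)]

lemma exists_orderIso_sign_eq_of_strictMonoOn {F G : ℝ → ℝ} (hF : Continuous F)
    (hG : Continuous G) {a b : ℝ} (hab : a < b) (hFm : StrictMonoOn F (Set.Icc a b))
    (hGm : StrictMonoOn G (Set.Icc a b)) (ha : sign (F a) = sign (G a))
    (hb : sign (F b) = sign (G b)) :
    ∃ ψ : ℝ ≃o ℝ, (∀ t ∉ Set.Ioo a b, ψ t = t) ∧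
      ∀ t ∈ Set.Icc a b, sign (F t) = sign (G (ψ t)) := by
  have left_mem : a ∈ Set.Icc a b := Set.left_mem_Icc.2 hab.le
  have right_mem : b ∈ Set.Icc a b := Set.right_mem_Icc.2 hab.le
  rcases le_or_gt 0 (F a) with h0a | ha0
  · refine ⟨OrderIso.refl ℝ, fun t _ => rfl, fun t ht => ?_⟩
    rcases ht.1.eq_or_lt with rfl | hat
    · exact ha
    · have h0a' : 0 ≤ G a := sign_nonneg_iff.1 (ha ▸ sign_nonneg_iff.2 h0a)
      exact (sign_pos (h0a.trans_lt (hFm left_mem ht hat))).trans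
        (sign_pos (h0a'.trans_lt (hGm left_mem ht hat))).symm
  rcases le_or_gt (F b) 0 with hb0 | h0b
  · refine ⟨OrderIso.refl ℝ, fun t _ => rfl, fun t ht => ?_⟩
    rcases ht.2.eq_or_lt with rfl | htb
    · exact hb
    · have hb0' : G b ≤ 0 := sign_nonpos_iff.1 (hb ▸ sign_nonpos_iff.2 hb0)
      exact (sign_neg ((hFm ht right_mem htb).trans_le hb0)).trans
        (sign_neg ((hGm ht right_mem htb).trans_le hb0')).symm
  have ha0' : G a < 0 := sign_eq_neg_one_iff.1 (ha ▸ sign_neg ha0)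
  have h0b' : 0 < G b := sign_eq_one_iff.1 (hb ▸ sign_pos h0b)
  obtain ⟨r, hr, hFr⟩ := intermediate_value_Ioo hab.le hF.continuousOn ⟨ha0, h0b⟩
  obtain ⟨ρ, hρ, hGρ⟩ := intermediate_value_Ioo hab.le hG.continuousOn ⟨ha0', h0b'⟩
  obtain ⟨ψ, hψ, fixes⟩ := exists_orderIso_apply_eq hr hρ
  refine ⟨ψ, fixes, fun t ht => ?_⟩
  have hψt : ψ t ∈ Set.Icc a b := by
    rw [← fixes a (by simp), ← fixes b (by simp)]
    exact ⟨ψ.monotone ht.1, ψ.monotone ht.2⟩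
  rw [sign_eq_sign_sub_of_strictMonoOn hFm (Set.Ioo_subset_Icc_self hr) hFr ht,
    sign_eq_sign_sub_of_strictMonoOn hGm (Set.Ioo_subset_Icc_self hρ) hGρ hψt, ← hψ]
  have hψm : StrictMonoOn (fun s => ψ s - ψ r) Set.univ :=
    fun x _ y _ hxy => sub_lt_sub_right (ψ.strictMono hxy) _
  exact (sign_eq_sign_sub_of_strictMonoOn hψm trivial (sub_self _) trivial).symm

lemma StrictCoMonotoneOn.exists_orderIso_sign_eq {F G : ℝ → ℝ} {a b : ℝ}
    (h : StrictCoMonotoneOn F G (Set.Icc a b)) (hF : Continuous F) (hG : Continuous G)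
    (hab : a < b) (ha : sign (F a) = sign (G a)) (hb : sign (F b) = sign (G b)) :
    ∃ ψ : ℝ ≃o ℝ, (∀ t ∉ Set.Ioo a b, ψ t = t) ∧
      ∀ t ∈ Set.Icc a b, sign (F t) = sign (G (ψ t)) := by
  rcases h with ⟨hFm, hGm⟩ | ⟨hFm, hGm⟩
  · exact exists_orderIso_sign_eq_of_strictMonoOn hF hG hab hFm hGm ha hb
  · simpa only [Pi.neg_apply, Left.sign_neg, neg_inj] using
      exists_orderIso_sign_eq_of_strictMonoOn hF.neg hG.neg hab hFm.neg hGm.neg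
        (by simpa [Left.sign_neg] using ha) (by simpa [Left.sign_neg] using hb)

lemma exists_orderIso_sign_eq_of_cells {F G : ℝ → ℝ} (hF : Continuous F) (hG : Continuous G)
    (Z : Finset ℝ) (hZ : ∀ z ∈ Z, sign (F z) = sign (G z))
    (hcell : ∀ a ∈ Z, ∀ b ∈ Z, a < b → (∀ z ∈ Z, z ∉ Set.Ioo a b) →
      StrictCoMonotoneOn F G (Set.Icc a b))
    (hlow : ∀ t, (∀ z ∈ Z, t ≤ z) → sign (F t) = sign (G t)) :
    ∃ ψ : ℝ ≃o ℝ, (∀ z ∈ Z, ψ z = z) ∧ (∀ t, (∀ z ∈ Z, z ≤ t) → ψ t = t) ∧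
      ∀ t, (∃ z ∈ Z, t ≤ z) → sign (F t) = sign (G (ψ t)) := by
  induction Z using Finset.induction_on_max with
  | empty => exact ⟨OrderIso.refl ℝ, by simp, by simp, by simp⟩
  | insert b Z hb ih =>
    rcases Z.eq_empty_or_nonempty with rfl | hne
    · exact ⟨OrderIso.refl ℝ, by simp, by simp, fun t ht => hlow t (by simpa using ht)⟩
    simp only [Finset.forall_mem_insert, Finset.exists_mem_insert] at hZ hcell hlow ⊢
    obtain ⟨ψ, fixes_Z, fixes_above, match_below⟩ := ih hZ.2
      (fun x hx y hy hxy hfree => (hcell.2 x hx).2 y hy hxy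
        ⟨fun h => (hb y hy).not_gt h.2, hfree⟩)
      (fun t ht => hlow t ⟨(ht _ hne.choose_spec).trans (hb _ hne.choose_spec).le, ht⟩)
    set c := Z.max' hne
    have hcZ : c ∈ Z := Z.max'_mem hne
    have le_c : ∀ z ∈ Z, z ≤ c := fun z hz => Z.le_max' z hz
    have hcb : c < b := hb c hcZ
    obtain ⟨χ, fixes_off, match_cell⟩ := ((hcell.2 c hcZ).1 hcb
      ⟨fun h => h.2.false, fun z hz h => (le_c z hz).not_gt h.1⟩).exists_orderIso_sign_eq
      hF hG hcb (hZ.2 c hcZ) hZ.1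
    have fixes_le : ∀ t ≤ c, χ t = t := fun t ht => fixes_off t fun h => ht.not_gt h.1
    have fixes_ge : ∀ t, b ≤ t → χ t = t := fun t ht => fixes_off t fun h => ht.not_gt h.2
    refine ⟨χ.trans ψ, ⟨?_, fun z hz => ?_⟩, fun t ht => ?_, fun t ht => ?_⟩ <;>
      simp only [OrderIso.trans_apply]
    · rw [fixes_ge b le_rfl, fixes_above b fun z hz => (hb z hz).le]
    · rw [fixes_le z (le_c z hz), fixes_Z z hz]
    · rw [fixes_ge t ht.1, fixes_above t ht.2]
    · rcases le_or_gt t c with htc | hct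
      · rw [fixes_le t htc, match_below t ⟨c, hcZ, htc⟩]
      · have htb : t ≤ b := ht.elim id fun ⟨z, hz, h⟩ => h.trans (hb z hz).le
        have hcχ : c ≤ χ t := (fixes_le c le_rfl).ge.trans (χ.monotone hct.le)
        rw [fixes_above (χ t) fun z hz => (le_c z hz).trans hcχ]
        exact match_cell t ⟨hct.le, htb⟩

end OrderIso

section SignMatch

open Polynomial

/-- The order automorphism `φ` of the line carries the sign of `f` to the sign of `h`. -/
def SignMatch (φ : ℝ ≃o ℝ) (f h : ℝ[X]) : Prop :=
  ∀ t, sign (f.eval t) = sign (h.eval (φ t))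

lemma eventually_atTop_eval_mul_derivative_pos {f : ℝ[X]} (hf : 0 < f.natDegree) :
    ∀ᶠ t in Filter.atTop, 0 < f.eval t * f.derivative.eval t := by
  have hf0 : f ≠ 0 := by rintro rfl; simp at hf
  have lead_pos : 0 < (f * derivative f).leadingCoeff := by
    have hlead : (f * derivative f).leadingCoeff = f.natDegree * f.leadingCoeff ^ 2 := by
      rw [leadingCoeff_mul, leadingCoeff_derivative]
      ring
    have := leadingCoeff_ne_zero.2 hf0
    rw [hlead]
    positivity
  have hf'0 : derivative f ≠ 0 :=
    right_ne_zero_of_mul (leadingCoeff_ne_zero.1 lead_pos.ne')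
  have degree_pos : 0 < (f * derivative f).degree := by
    rw [← natDegree_pos_iff_degree_pos, natDegree_mul hf0 hf'0]
    omega
  filter_upwards [((f * derivative f).tendsto_atTop_of_leadingCoeff_nonneg degree_pos
    lead_pos.le).eventually_gt_atTop 0] with t ht
  simpa using ht

lemma eventually_atBot_eval_mul_derivative_neg {f : ℝ[X]} (hf : 0 < f.natDegree) :
    ∀ᶠ t in Filter.atBot, f.eval t * f.derivative.eval t < 0 := by
  filter_upwards [Filter.tendsto_neg_atBot_atTop.eventually
    (eventually_atTop_eval_mul_derivative_pos (f := f.comp (-X))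
      (by simpa [natDegree_comp] using hf))] with t ht
  simpa [derivative_comp] using ht

lemma sign_eq_of_sign_mul_eq {a b c d : ℝ} (h : sign (a * b) = sign (c * d))
    (hbd : sign b = sign d) (hb : b ≠ 0) : sign a = sign c := by
  rw [sign_mul, sign_mul, ← hbd] at h
  exact mul_right_cancel₀ (sign_ne_zero.2 hb) h

lemma SignMatch.eventually_atTop {φ : ℝ ≃o ℝ} {f h : ℝ[X]}
    (hd : SignMatch φ f.derivative h.derivative) (hf : 0 < f.natDegree) (hh : 0 < h.natDegree) :
    ∀ᶠ t in Filter.atTop, sign (f.eval t) = sign (h.eval (φ t)) := by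
  filter_upwards [eventually_atTop_eval_mul_derivative_pos hf,
    φ.tendsto_atTop.eventually (eventually_atTop_eval_mul_derivative_pos hh)] with t hft hht
  exact sign_eq_of_sign_mul_eq ((sign_pos hft).trans (sign_pos hht).symm) (hd t)
    (right_ne_zero_of_mul hft.ne')

lemma SignMatch.eventually_atBot {φ : ℝ ≃o ℝ} {f h : ℝ[X]}
    (hd : SignMatch φ f.derivative h.derivative) (hf : 0 < f.natDegree) (hh : 0 < h.natDegree) :
    ∀ᶠ t in Filter.atBot, sign (f.eval t) = sign (h.eval (φ t)) := by
  filter_upwards [eventually_atBot_eval_mul_derivative_neg hf,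
    φ.tendsto_atBot.eventually (eventually_atBot_eval_mul_derivative_neg hh)] with t hft hht
  exact sign_eq_of_sign_mul_eq ((sign_neg hft).trans (sign_neg hht).symm) (hd t)
    (right_ne_zero_of_mul hft.ne)

lemma strictMonoOn_or_strictAntiOn_of_derivative_ne_zero {f : ℝ[X]} {a b : ℝ}
    (h : ∀ t ∈ Set.Ioo a b, f.derivative.eval t ≠ 0) {c : ℝ} (hc : c ∈ Set.Ioo a b) :
    0 < f.derivative.eval c ∧ StrictMonoOn (fun t => f.eval t) (Set.Icc a b) ∨
      f.derivative.eval c < 0 ∧ StrictAntiOn (fun t => f.eval t) (Set.Icc a b) := by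
  have same_sign : ∀ t ∈ interior (Set.Icc a b),
      sign (f.derivative.eval t) = sign (f.derivative.eval c) := fun t ht => by
    rw [interior_Icc] at ht
    exact sign_eq_of_forall_uIcc_ne_zero f.derivative.continuous fun u hu =>
      h u (Set.ordConnected_Ioo.uIcc_subset ht hc hu)
  rcases (h c hc).lt_or_gt with hneg | hpos
  · refine .inr ⟨hneg, strictAntiOn_of_deriv_neg (convex_Icc a b) f.continuousOn fun t ht => ?_⟩
    rw [f.deriv]
    exact sign_eq_neg_one_iff.1 ((same_sign t ht).trans (sign_neg hneg))
  · refine .inl ⟨hpos, strictMonoOn_of_deriv_pos (convex_Icc a b) f.continuousOn fun t ht => ?_⟩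
    rw [f.deriv]
    exact sign_eq_one_iff.1 ((same_sign t ht).trans (sign_pos hpos))

lemma SignMatch.strictCoMonotoneOn {φ : ℝ ≃o ℝ} {f h : ℝ[X]}
    (hd : SignMatch φ f.derivative h.derivative) {a b : ℝ} (hab : a < b)
    (hroot : ∀ t ∈ Set.Ioo a b, f.derivative.eval t ≠ 0) :
    StrictCoMonotoneOn (fun t => f.eval t) (fun t => h.eval (φ t)) (Set.Icc a b) := by
  obtain ⟨c, hc⟩ := Set.nonempty_Ioo.2 hab
  have hroot' : ∀ t ∈ Set.Ioo (φ a) (φ b), h.derivative.eval t ≠ 0 := fun t ht => by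
    have hmem : φ.symm t ∈ Set.Ioo a b := ⟨φ.lt_symm_apply.2 ht.1, φ.symm_apply_lt.2 ht.2⟩
    have := sign_ne_zero.2 (hroot _ hmem)
    rwa [hd, φ.apply_symm_apply, sign_ne_zero] at this
  have maps : Set.MapsTo φ (Set.Icc a b) (Set.Icc (φ a) (φ b)) := φ.monotone.mapsTo_Icc
  have hsign := hd c
  rcases strictMonoOn_or_strictAntiOn_of_derivative_ne_zero hroot hc with
    ⟨hfc, hf⟩ | ⟨hfc, hf⟩ <;>
  rcases strictMonoOn_or_strictAntiOn_of_derivative_ne_zero hroot'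
    ⟨φ.strictMono hc.1, φ.strictMono hc.2⟩ with ⟨hhc, hh⟩ | ⟨hhc, hh⟩
  · exact .inl ⟨hf, hh.comp (φ.strictMono.strictMonoOn _) maps⟩
  · simp [sign_pos hfc, sign_neg hhc] at hsign
  · simp [sign_neg hfc, sign_pos hhc] at hsign
  · exact .inr ⟨hf, hh.comp_strictMonoOn (φ.strictMono.strictMonoOn _) maps⟩

lemma exists_signMatch_extension {κ : Type*} {P Q : κ → ℝ[X]} {f h : ℝ[X]} {φ : ℝ ≃o ℝ}
    (hφ : ∀ k, SignMatch φ (P k) (Q k)) (hd : SignMatch φ f.derivative h.derivative)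
    (hf : 0 < f.natDegree) (hh : 0 < h.natDegree) (Z : Finset ℝ)
    (hZP : ∀ k, P k ≠ 0 → ∀ z, (P k).IsRoot z → z ∈ Z)
    (hZf : ∀ z, f.derivative.IsRoot z → z ∈ Z)
    (hZ : ∀ z ∈ Z, sign (f.eval z) = sign (h.eval (φ z))) :
    ∃ φ' : ℝ ≃o ℝ, (∀ k, SignMatch φ' (P k) (Q k)) ∧ SignMatch φ' f h := by
  obtain ⟨lo, hlo⟩ := Filter.eventually_atBot.1 (hd.eventually_atBot hf hh)
  obtain ⟨hi, hhi⟩ := Filter.eventually_atTop.1 (hd.eventually_atTop hf hh)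
  obtain ⟨ψ, fixes, fixes_above, matches_below⟩ := exists_orderIso_sign_eq_of_cells
    (F := fun t => f.eval t) (G := fun t => h.eval (φ t)) f.continuous
    (h.continuous.comp φ.continuous) (insert lo (insert hi Z))
    (by simpa using ⟨hlo lo le_rfl, hhi hi le_rfl, hZ⟩)
    (fun a _ b _ hab hfree => hd.strictCoMonotoneOn hab fun t ht h0 =>
      hfree t (by simp [hZf t h0]) ht)
    (fun t ht => hlo t (ht lo (by simp)))
  refine ⟨ψ.trans φ, fun k t => ?_, fun t => ?_⟩
  · rcases eq_or_ne (P k) 0 with h0 | h0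
    · simpa [h0] using hφ k (ψ t)
    · rw [OrderIso.trans_apply, ← hφ k, sign_apply_orderIso_of_forall_zero_fixed
        (P k).continuous ψ fun u hu => fixes u (by simp [hZP k h0 u hu])]
  · by_cases ht : ∃ z ∈ insert lo (insert hi Z), t ≤ z
    · exact matches_below t ht
    · push Not at ht
      rw [OrderIso.trans_apply, fixes_above t fun z hz => (ht z hz).le]
      exact hhi t (ht hi (by simp)).le

end SignMatch

section UniformSigns

open Polynomial

variable {R : Type*} [CommRing R]

/-! ### Signs of families of univariate polynomials with coefficients in a ring -/

lemma exists_leadingCoeff_pow_mul_eq_mul_add {g : R[X]} (hg : 0 < g.natDegree) (f : R[X]) :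
    ∃ (M : ℕ) (q r : R[X]), C g.leadingCoeff ^ M * f = q * g + r ∧ r.natDegree < g.natDegree := by
  induction hN : f.natDegree using Nat.strong_induction_on generalizing f with
  | _ N ih =>
    rcases lt_or_ge f.natDegree g.natDegree with hlt | hge
    · exact ⟨0, 0, f, by simp, hlt⟩
    obtain ⟨M, q, r, hqr, hr⟩ := ih _
      (hN ▸ natDegree_cancelLeads_lt_of_natDegree_le_natDegree hge (hg.trans_le hge))
      (g.cancelLeads f) rfl
    refine ⟨M + 1,
      q + C g.leadingCoeff ^ M * (C f.leadingCoeff * X ^ (f.natDegree - g.natDegree)), r, ?_, hr⟩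
    rw [cancelLeads, Nat.sub_eq_zero_of_le hge] at hqr
    linear_combination hqr

/-- Whenever `g` specializes to a real polynomial of degree `j`, the specializations of `f` and
`r` have the same sign at each of its roots. -/
def IsSignRemainder (f g : R[X]) (j : ℕ) (r : R[X]) : Prop :=
  ∀ (x : R →+* ℝ) (z : ℝ), (g.map x).natDegree = j → (g.map x).IsRoot z →
    sign ((f.map x).eval z) = sign ((r.map x).eval z)

lemma exists_isSignRemainder (f g : R[X]) {j : ℕ} (hj : 0 < j) :
    ∃ r : R[X], r.natDegree < j ∧ IsSignRemainder f g j r := by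
  induction hN : g.natDegree using Nat.strong_induction_on generalizing g with
  | _ N ih =>
    rcases lt_trichotomy g.natDegree j with hlt | rfl | hgt
    · exact ⟨0, by simpa, fun x z hx _ => absurd hx (natDegree_map_le.trans_lt hlt).ne⟩
    · obtain ⟨M, q, r, hqr, hr⟩ := exists_leadingCoeff_pow_mul_eq_mul_add hj f
      -- An even power of the leading coefficient does not affect signs.
      refine ⟨C g.leadingCoeff ^ M * r, ?_, fun x z hx hz => ?_⟩
      · rw [← C_pow]
        exact (natDegree_C_mul_le _ _).trans_lt hr
      · have hlead : x g.leadingCoeff ≠ 0 := by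
          rw [leadingCoeff, ← coeff_map, ← hx]
          exact leadingCoeff_ne_zero.2 (ne_zero_of_natDegree_gt (hx ▸ hj))
        have heval := congrArg (fun p => (p.map x).eval z) hqr
        simp only [Polynomial.map_mul, Polynomial.map_pow, map_C, Polynomial.map_add, eval_mul,
          eval_pow, eval_C, eval_add, hz.eq_zero, mul_zero, zero_add] at heval ⊢
        have hpos : 0 < (x g.leadingCoeff * x g.leadingCoeff) ^ M :=
          pow_pos (mul_self_pos.2 hlead) M
        rw [← heval, ← mul_assoc, ← mul_pow, sign_mul, sign_pos hpos, one_mul]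
    · obtain ⟨r, hr, hrem⟩ := ih _ (hN ▸ (eraseLead_natDegree_le g).trans_lt (by omega))
        g.eraseLead rfl
      refine ⟨r, hr, fun x z hx hz => ?_⟩
      have herase : g.eraseLead.map x = g.map x := by
        have hlead : x g.leadingCoeff = 0 := by
          rw [leadingCoeff, ← coeff_map]
          exact coeff_eq_zero_of_natDegree_lt (hx ▸ hgt)
        rw [← self_sub_C_mul_X_pow, Polynomial.map_sub, Polynomial.map_mul, map_C, hlead, C_0,
          zero_mul, sub_zero]
      exact hrem x z (herase ▸ hx) (herase ▸ hz)

lemma sign_coeff_eq_of_forall_coeffs {f : R[X]} {x y : R →+* ℝ}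
    (h : ∀ c ∈ f.coeffs, sign (x c) = sign (y c)) (i : ℕ) :
    sign ((f.map x).coeff i) = sign ((f.map y).coeff i) := by
  rw [coeff_map, coeff_map]
  rcases eq_or_ne (f.coeff i) 0 with h0 | h0
  · simp [h0]
  · exact h _ (coeff_mem_coeffs h0)

lemma natDegree_eq_of_sign_coeff_eq {f h : ℝ[X]}
    (hfh : ∀ i, sign (f.coeff i) = sign (h.coeff i)) : f.natDegree = h.natDegree := by
  have hsupp : f.support = h.support := by
    ext i
    rw [mem_support_iff, mem_support_iff, ← sign_ne_zero, hfh, sign_ne_zero]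
  rw [natDegree, natDegree, degree, degree, hsupp]

/-- The signs of finitely many elements of `R` under a specialization `R →+* ℝ` determine the
arrangement on the real line of the signs of all specialized members of `F`. -/
def HasUniformSigns (F : Set R[X]) : Prop :=
  ∃ C : Set R, C.Finite ∧ ∀ x y : R →+* ℝ, (∀ c ∈ C, sign (x c) = sign (y c)) →
    ∃ φ : ℝ ≃o ℝ, ∀ f ∈ F, SignMatch φ (f.map x) (f.map y)

lemma HasUniformSigns.mono {F G : Set R[X]} (hG : HasUniformSigns G) (hFG : F ⊆ G) :
    HasUniformSigns F := by
  obtain ⟨C, hC, hφ⟩ := hG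
  exact ⟨C, hC, fun x y hxy => (hφ x y hxy).imp fun _ h f hf => h f (hFG hf)⟩

lemma SignMatch.of_natDegree_eq_zero {f h : ℝ[X]} (hf : f.natDegree = 0) (hh : h.natDegree = 0)
    (h0 : sign (f.coeff 0) = sign (h.coeff 0)) (φ : ℝ ≃o ℝ) : SignMatch φ f h := fun t => by
  rw [eq_C_of_natDegree_eq_zero hf, eq_C_of_natDegree_eq_zero hh, eval_C, eval_C, h0]

lemma IsSignRemainder.sign_eval_eq {f g r : R[X]} {j : ℕ} (hrem : IsSignRemainder f g j r)
    {x y : R →+* ℝ} {φ : ℝ ≃o ℝ} (hg : SignMatch φ (g.map x) (g.map y))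
    (hr : SignMatch φ (r.map x) (r.map y)) (hx : (g.map x).natDegree = j)
    (hy : (g.map y).natDegree = j) {z : ℝ} (hz : (g.map x).IsRoot z) :
    sign ((f.map x).eval z) = sign ((f.map y).eval (φ z)) := by
  have hz' : (g.map y).IsRoot (φ z) := by
    rw [IsRoot, ← sign_eq_zero_iff, ← hg, hz.eq_zero, sign_zero]
  rw [hrem x z hx hz, hrem y (φ z) hy hz', hr]

/-- A sign matching for `G ∪ E` already matches the signs of `f` at the roots of members of `G`,
where they are signs of remainders; between these roots `f` is monotone, as `f'` is in `G`. -/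
lemma HasUniformSigns.insert_of_isSignRemainder {f : R[X]} {G E : Set R[X]}
    (hGE : HasUniformSigns (G ∪ E)) (hG : G.Finite) (hf : derivative f ∈ G)
    (hE : ∀ g ∈ G, ∀ j ∈ Set.Icc 1 g.natDegree, ∃ r ∈ E, IsSignRemainder f g j r) :
    HasUniformSigns (insert f G) := by
  obtain ⟨C, hC, hmatch⟩ := hGE
  refine ⟨C ∪ ⋃ g ∈ insert f G, (g.coeffs : Set R),
    hC.union ((hG.insert f).biUnion fun g _ => g.coeffs.finite_toSet), fun x y hxy => ?_⟩
  obtain ⟨φ, hφ⟩ := hmatch x y fun c hc => hxy c (.inl hc)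
  have hcoeff : ∀ g ∈ insert f G, ∀ i, sign ((g.map x).coeff i) = sign ((g.map y).coeff i) :=
    fun g hg => sign_coeff_eq_of_forall_coeffs fun c hc =>
      hxy c (.inr (Set.mem_biUnion hg hc))
  have hdeg : ∀ g ∈ insert f G, (g.map x).natDegree = (g.map y).natDegree :=
    fun g hg => natDegree_eq_of_sign_coeff_eq (hcoeff g hg)
  rcases Nat.eq_zero_or_pos (f.map x).natDegree with h0 | hpos
  · exact ⟨φ, Set.forall_mem_insert.2 ⟨.of_natDegree_eq_zero h0
      (hdeg f (Set.mem_insert f G) ▸ h0) (hcoeff f (Set.mem_insert f G) 0) φ,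
      fun g hg => hφ g (.inl hg)⟩⟩
  have hmatch_root : ∀ g ∈ G, g.map x ≠ 0 → ∀ z, (g.map x).IsRoot z →
      sign ((f.map x).eval z) = sign ((f.map y).eval (φ z)) := by
    intro g hg hg0 z hz
    have hgpos : 0 < (g.map x).natDegree :=
      natDegree_pos_of_eval₂_root hg0 (RingHom.id ℝ) hz (fun _ => id)
    obtain ⟨r, hr, hrem⟩ := hE g hg _ ⟨hgpos, natDegree_map_le⟩
    exact hrem.sign_eval_eq (hφ g (.inl hg)) (hφ r (.inr hr)) rfl (hdeg g (.inr hg)).symm hz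
  have hfin : (⋃ g ∈ G, {z | z ∈ (g.map x).roots}).Finite :=
    hG.biUnion fun g _ => (g.map x).roots.finite_toSet
  have hmem_iff : ∀ z, z ∈ hfin.toFinset ↔ ∃ g ∈ G, g.map x ≠ 0 ∧ (g.map x).IsRoot z := by
    simp [and_left_comm]
  have hderiv0 : (derivative f).map x ≠ 0 := by
    rw [← derivative_map]
    exact mt derivative_eq_zero.1 hpos.ne'
  obtain ⟨φ', hφ', hφ'f⟩ := exists_signMatch_extension
    (P := fun g : G => g.1.map x) (Q := fun g : G => g.1.map y) (f := f.map x) (h := f.map y)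
    (fun g => hφ g (.inl g.2)) (by simpa only [derivative_map] using hφ _ (.inl hf)) hpos
    (hdeg f (Set.mem_insert f G) ▸ hpos) hfin.toFinset
    (fun g hg z hz => (hmem_iff z).2 ⟨g, g.2, hg, hz⟩)
    (fun z hz => (hmem_iff z).2 ⟨_, hf, hderiv0, derivative_map f x ▸ hz⟩)
    (fun z hz => by
      obtain ⟨g, hg, hg0, hroot⟩ := (hmem_iff z).1 hz
      exact hmatch_root g hg hg0 z hroot)
  exact ⟨φ', Set.forall_mem_insert.2 ⟨hφ'f, fun g hg => hφ' ⟨g, hg⟩⟩⟩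

lemma hasUniformSigns_of_natDegree_le {F : Set R[X]} (hF : F.Finite) (m : ℕ)
    (hm : ∀ f ∈ F, f.natDegree ≤ m) : HasUniformSigns F := by
  induction m generalizing F with
  | zero =>
    refine ⟨(fun f => f.coeff 0) '' F, hF.image _, fun x y hxy => ⟨OrderIso.refl ℝ,
      fun f hf => .of_natDegree_eq_zero ?_ ?_ ?_ _⟩⟩
    · exact Nat.le_zero.1 (natDegree_map_le.trans (hm f hf))
    · exact Nat.le_zero.1 (natDegree_map_le.trans (hm f hf))
    · simpa only [coeff_map] using hxy _ ⟨f, hf, rfl⟩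
  | succ m ih =>
    suffices ∀ E : Set R[X], E.Finite → (∀ f ∈ E, f.natDegree ≤ m) → HasUniformSigns (F ∪ E) by
      simpa using this ∅ Set.finite_empty (by simp)
    induction F, hF using Set.Finite.induction_on with
    | empty => intro E hE hEm; simpa using ih hE hEm
    | @insert f T _ hT ihT =>
      intro E hE hEm
      obtain ⟨hfm, hTm⟩ := Set.forall_mem_insert.1 hm
      have hf'm : (derivative f).natDegree ≤ m := (natDegree_derivative_le f).trans (by omega)
      set G : Set R[X] := T ∪ insert (derivative f) E with hGdef
      have hG : G.Finite := hT.union (hE.insert _)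
      have hGm : ∀ g ∈ G, g.natDegree ≤ m + 1 := by
        rintro g (hg | rfl | hg)
        · exact hTm g hg
        · exact hf'm.trans m.le_succ
        · exact (hEm g hg).trans m.le_succ
      choose! rem hrem_deg hrem using
        fun (g : R[X]) (j : ℕ) (hj : 0 < j) => exists_isSignRemainder f g hj
      set Rem : Set R[X] := (fun q : R[X] × ℕ => rem q.1 q.2) '' (G ×ˢ Set.Icc 1 (m + 1))
      have hGRem : HasUniformSigns (G ∪ Rem) := by
        rw [hGdef, Set.union_assoc]
        refine ihT hTm _ ((hE.insert _).union ((hG.prod (Set.finite_Icc _ _)).image _)) ?_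
        rintro _ ((rfl | hg) | ⟨⟨g, j⟩, ⟨_, hj⟩, rfl⟩)
        · exact hf'm
        · exact hEm _ hg
        · exact Nat.le_of_lt_succ ((hrem_deg g j hj.1).trans_le hj.2)
      refine (hGRem.insert_of_isSignRemainder hG (.inr (.inl rfl)) fun g hg j hj => ?_).mono ?_
      · exact ⟨rem g j, ⟨(g, j), ⟨hg, hj.1, hj.2.trans (hGm g hg)⟩, rfl⟩, hrem g j hj.1⟩
      · rintro g ((rfl | hg) | hg)
        · exact .inl rfl
        · exact .inr (.inl hg)
        · exact .inr (.inr (.inr hg))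

theorem hasUniformSigns_of_finite {F : Set R[X]} (hF : F.Finite) : HasUniformSigns F := by
  obtain ⟨m, hm⟩ := (hF.image natDegree).bddAbove
  exact hasUniformSigns_of_natDegree_le hF m fun f hf => hm ⟨f, hf, rfl⟩

end UniformSigns

section SignDetermined

open MvPolynomial

/-! ### Semialgebraic sets and quantifier elimination -/

/-- Membership in `S` depends only on the signs of finitely many polynomials: the description of
semialgebraic sets that is most convenient for quantifier elimination. -/
def IsSignDetermined {ι : Type*} (S : Set (ι → ℝ)) : Prop :=
  ∃ C : Set (MvPolynomial ι ℝ), C.Finite ∧ ∀ x y : ι → ℝ,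
    (∀ c ∈ C, sign (eval x c) = sign (eval y c)) → x ∈ S → y ∈ S

variable {ι κ : Type*}

namespace IsSignDetermined

variable {S T : Set (ι → ℝ)}

lemma compl (hS : IsSignDetermined S) : IsSignDetermined Sᶜ := by
  obtain ⟨C, hC, h⟩ := hS
  exact ⟨C, hC, fun x y hxy hx hy => hx (h y x (fun c hc => (hxy c hc).symm) hy)⟩

lemma inter (hS : IsSignDetermined S) (hT : IsSignDetermined T) : IsSignDetermined (S ∩ T) := by
  obtain ⟨C, hC, hCS⟩ := hS
  obtain ⟨D, hD, hDT⟩ := hT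
  exact ⟨C ∪ D, hC.union hD, fun x y hxy hx => ⟨hCS x y (fun c hc => hxy c (.inl hc)) hx.1,
    hDT x y (fun c hc => hxy c (.inr hc)) hx.2⟩⟩

lemma imp {P Q : (ι → ℝ) → Prop} (hP : IsSignDetermined {x | P x})
    (hQ : IsSignDetermined {x | Q x}) : IsSignDetermined {x | P x → Q x} := by
  convert (hP.inter hQ.compl).compl using 1
  ext x
  simp

lemma setOf_forall [Finite κ] {S : κ → Set (ι → ℝ)} (hS : ∀ k, IsSignDetermined (S k)) :
    IsSignDetermined {x | ∀ k, x ∈ S k} := by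
  choose C hC h using hS
  exact ⟨⋃ k, C k, Set.finite_iUnion hC, fun x y hxy hx k =>
    h k x y (fun c hc => hxy c (Set.mem_iUnion_of_mem k hc)) (hx k)⟩

lemma setOf_eval_pos (P : MvPolynomial ι ℝ) : IsSignDetermined {x | 0 < eval x P} := by
  refine ⟨{P}, Set.finite_singleton P, fun x y hxy hx => ?_⟩
  exact sign_eq_one_iff.1 ((hxy P rfl).symm.trans (sign_pos hx))

lemma setOf_eval_eq_zero (P : MvPolynomial ι ℝ) : IsSignDetermined {x | eval x P = 0} := by
  refine ⟨{P}, Set.finite_singleton P, fun x y hxy hx => ?_⟩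
  exact sign_eq_zero_iff.1 ((hxy P rfl).symm.trans (sign_eq_zero_iff.2 hx))

lemma preimage_eval {S : Set (κ → ℝ)} (hS : IsSignDetermined S) (P : κ → MvPolynomial ι ℝ) :
    IsSignDetermined {x | (fun k => eval x (P k)) ∈ S} := by
  obtain ⟨C, hC, h⟩ := hS
  have eval_bind (x : ι → ℝ) (c : MvPolynomial κ ℝ) :
      eval x (bind₁ P c) = eval (fun k => eval x (P k)) c := by
    simpa only [aeval_eq_eval] using aeval_bind₁ x P c
  refine ⟨bind₁ P '' C, hC.image _, fun x y hxy => h _ _ fun c hc => ?_⟩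
  rw [← eval_bind, ← eval_bind]
  exact hxy _ ⟨c, hc, rfl⟩

lemma reindex {S : Set (κ → ℝ)} (hS : IsSignDetermined S) (e : κ → ι) :
    IsSignDetermined {x : ι → ℝ | (fun k => x (e k)) ∈ S} := by
  simpa only [eval_X] using hS.preimage_eval fun k => X (e k)

end IsSignDetermined

/-- A polynomial, viewed as a univariate polynomial in the variable `X i`. Its coefficients are
again polynomials in all variables, in which `X i` does not occur. -/
noncomputable def univariateAt [DecidableEq ι] (i : ι) :
    MvPolynomial ι ℝ →+* Polynomial (MvPolynomial ι ℝ) :=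
  (aeval (Function.update (fun k => Polynomial.C (X k)) i Polynomial.X)).toRingHom

lemma eval_map_univariateAt [DecidableEq ι] (i : ι) (x : ι → ℝ) (t : ℝ) (c : MvPolynomial ι ℝ) :
    ((univariateAt i c).map (eval x)).eval t = eval (Function.update x i t) c := by
  induction c using MvPolynomial.induction_on with
  | C a => simp [univariateAt, ← algebraMap_eq, Polynomial.algebraMap_apply]
  | add p q hp hq => simp [hp, hq]
  | mul_X p k hp =>
    rw [map_mul, Polynomial.map_mul, Polynomial.eval_mul, hp, map_mul, eval_X]
    rcases eq_or_ne k i with rfl | hk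
    · simp [univariateAt]
    · simp [univariateAt, hk]

namespace IsSignDetermined

lemma setOf_exists_update [DecidableEq ι] {S : Set (ι → ℝ)} (hS : IsSignDetermined S) (i : ι) :
    IsSignDetermined {x | ∃ t, Function.update x i t ∈ S} := by
  obtain ⟨C, hC, h⟩ := hS
  obtain ⟨D, hD, hφ⟩ := hasUniformSigns_of_finite (hC.image (univariateAt i))
  refine ⟨D, hD, fun x y hxy ⟨t, ht⟩ => ?_⟩
  obtain ⟨φ, hφ⟩ := hφ (eval x) (eval y) hxy
  refine ⟨φ t, h _ _ (fun c hc => ?_) ht⟩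
  rw [← eval_map_univariateAt, ← eval_map_univariateAt]
  exact hφ _ ⟨c, hc, rfl⟩ t

lemma setOf_exists_eq_off {S : Set (ι → ℝ)} (hS : IsSignDetermined S) (s : Finset ι) :
    IsSignDetermined {x | ∃ y ∈ S, ∀ i ∉ s, y i = x i} := by
  classical
  induction s using Finset.induction_on with
  | empty =>
    convert hS using 1
    ext x
    exact ⟨fun ⟨y, hy, h⟩ => (funext fun i => h i (by simp) : y = x) ▸ hy,
      fun hx => ⟨x, hx, fun _ _ => rfl⟩⟩
  | insert j s hj ih =>
    convert ih.setOf_exists_update j using 1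
    ext x
    constructor
    · rintro ⟨y, hy, h⟩
      refine ⟨y j, y, hy, fun i hi => ?_⟩
      rcases eq_or_ne i j with rfl | hij
      · simp
      · simpa [hij] using h i (by simp [hij, hi])
    · rintro ⟨t, y, hy, h⟩
      refine ⟨y, hy, fun i hi => ?_⟩
      rw [Finset.mem_insert, not_or] at hi
      simpa [hi.1] using h i hi.2

lemma setOf_exists [Finite κ] {Φ : (ι → ℝ) → (κ → ℝ) → Prop}
    (h : IsSignDetermined {w : ι ⊕ κ → ℝ | Φ (fun i => w (.inl i)) (fun k => w (.inr k))}) :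
    IsSignDetermined {x : ι → ℝ | ∃ y : κ → ℝ, Φ x y} := by
  have := Fintype.ofFinite κ
  convert (h.setOf_exists_eq_off (Finset.univ.map .inr)).preimage_eval
    (Sum.elim (fun i => X i) (fun _ => 0)) using 1
  ext x
  constructor
  · rintro ⟨y, hy⟩
    exact ⟨Sum.elim x y, hy, by simp⟩
  · rintro ⟨w, hw, hwx⟩
    obtain rfl : (fun i => w (.inl i)) = x := funext fun i => by simpa using hwx (.inl i)
    exact ⟨_, hw⟩

lemma setOf_forall_fun [Finite κ] {Φ : (ι → ℝ) → (κ → ℝ) → Prop}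
    (h : IsSignDetermined {w : ι ⊕ κ → ℝ | Φ (fun i => w (.inl i)) (fun k => w (.inr k))}) :
    IsSignDetermined {x : ι → ℝ | ∀ y : κ → ℝ, Φ x y} := by
  convert (setOf_exists (Φ := fun x y => ¬ Φ x y) h.compl).compl using 1
  ext x
  simp

end IsSignDetermined

lemma sign_eq_iff_ite (a : ℝ) (σ : SignType) :
    sign a = σ ↔ if σ = 0 then a = 0 else 0 < if σ = -1 then -a else a := by
  cases σ
  · simp [SignType.zero_eq_zero, sign_eq_zero_iff]
  · simp [SignType.neg_eq_neg_one, sign_eq_neg_one_iff]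
  · simp [SignType.pos_eq_one, sign_eq_one_iff]

lemma isSemialgebraic_setOf_exists_forall {ι : Type} [Fintype ι] {τ : Type*} [Finite τ]
    [Finite κ] (P : τ → κ → MvPolynomial ι ℝ) (isEq : τ → κ → Prop) [∀ t l, Decidable (isEq t l)] :
    IsSemialgebraic {x : ι → ℝ | ∃ t, ∀ l,
      if isEq t l then eval x (P t l) = 0 else 0 < eval x (P t l)} := by
  obtain ⟨N, ⟨eN⟩⟩ := Finite.exists_equiv_fin τ
  obtain ⟨M, ⟨eM⟩⟩ := Finite.exists_equiv_fin κ
  refine ⟨N, M, fun t l => P (eN.symm t) (eM.symm l),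
    fun t l => decide (isEq (eN.symm t) (eM.symm l)), ?_⟩
  ext x
  simp only [Set.mem_iUnion, Set.mem_ofPred_eq, decide_eq_true_eq]
  rw [← eN.symm.exists_congr_right]
  exact exists_congr fun t => eM.symm.forall_congr_right.symm

theorem IsSignDetermined.isSemialgebraic {ι : Type} [Fintype ι] {S : Set (ι → ℝ)}
    (hS : IsSignDetermined S) : IsSemialgebraic S := by
  obtain ⟨C, hC, h⟩ := hS
  have := hC.to_subtype
  let pattern (x : ι → ℝ) (c : C) : SignType := sign (eval x c.1)
  convert isSemialgebraic_setOf_exists_forall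
    (fun (σ : pattern '' S) (c : C) => if σ.1 c = -1 then -c.1 else c.1)
    (fun σ c => σ.1 c = 0) using 1
  ext x
  have hpattern (σ : C → SignType) : pattern x = σ ↔ ∀ c, if σ c = 0
      then eval x (if σ c = -1 then -c.1 else c.1) = 0
      else 0 < eval x (if σ c = -1 then -c.1 else c.1) := by
    rw [funext_iff]
    refine forall_congr' fun c => (sign_eq_iff_ite _ _).trans ?_
    split_ifs with h0 h1 <;> simp_all
  simp only [Set.mem_ofPred_eq, ← hpattern]
  constructor
  · exact fun hx => ⟨⟨_, x, hx, rfl⟩, rfl⟩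
  · rintro ⟨⟨_, y, hy, rfl⟩, hxy⟩
    exact h y x (fun c hc => (congrFun hxy ⟨c, hc⟩).symm) hy

end SignDetermined

section SemialgebraicFun

open MvPolynomial

/-! ### Semialgebraic functions -/

/-- Semialgebraic real-valued functions on `ι → ℝ`: those whose graph, with the value as the
extra coordinate `Sum.inr ()`, is determined by the signs of finitely many polynomials. -/
def IsSemialgebraicFun {ι : Type*} (f : (ι → ℝ) → ℝ) : Prop :=
  IsSignDetermined {w : ι ⊕ Unit → ℝ | w (.inr ()) = f fun i => w (.inl i)}

variable {ι κ : Type*}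

lemma IsSignDetermined.preimage [Finite κ] {S : Set (κ → ℝ)} (hS : IsSignDetermined S)
    {f : κ → (ι → ℝ) → ℝ} (hf : ∀ k, IsSemialgebraicFun (f k)) :
    IsSignDetermined {x | (fun k => f k x) ∈ S} := by
  have hgraph : IsSignDetermined {x : ι → ℝ | ∃ y : κ → ℝ, (∀ k, y k = f k x) ∧ y ∈ S} :=
    .setOf_exists <| .inter
      (.setOf_forall fun k => (hf k).reindex (Sum.elim Sum.inl fun _ => Sum.inr k))
      (hS.reindex Sum.inr)
  convert hgraph using 1
  ext x
  constructor
  · exact fun h => ⟨_, fun _ => rfl, h⟩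
  · rintro ⟨y, hy, h⟩
    obtain rfl : y = fun k => f k x := funext hy
    exact h

namespace IsSemialgebraicFun

lemma eval (P : MvPolynomial ι ℝ) : IsSemialgebraicFun fun x => MvPolynomial.eval x P := by
  unfold IsSemialgebraicFun
  convert IsSignDetermined.setOf_eval_eq_zero (X (.inr ()) - rename (Sum.inl : ι → ι ⊕ Unit) P)
    using 1
  ext w
  simp [eval_rename, sub_eq_zero, Function.comp_def]

lemma coord (i : ι) : IsSemialgebraicFun fun x : ι → ℝ => x i := by
  simpa using IsSemialgebraicFun.eval (X i)

lemma const (c : ℝ) : IsSemialgebraicFun fun _ : ι → ℝ => c := by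
  simpa using IsSemialgebraicFun.eval (C c : MvPolynomial ι ℝ)

lemma reindex {f : (κ → ℝ) → ℝ} (hf : IsSemialgebraicFun f) (e : κ → ι) :
    IsSemialgebraicFun fun x : ι → ℝ => f fun k => x (e k) :=
  IsSignDetermined.reindex hf (Sum.map e id)

lemma comp [Finite κ] {g : (κ → ℝ) → ℝ} (hg : IsSemialgebraicFun g) {f : κ → (ι → ℝ) → ℝ}
    (hf : ∀ k, IsSemialgebraicFun (f k)) : IsSemialgebraicFun fun x => g fun k => f k x :=
  IsSignDetermined.preimage hg
    (f := Sum.elim (fun k (w : ι ⊕ Unit → ℝ) => f k fun i => w (Sum.inl i))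
      fun _ w => w (Sum.inr ()))
    (Sum.forall.2 ⟨fun k => (hf k).reindex Sum.inl, fun _ => coord (Sum.inr ())⟩)

variable {f g : (ι → ℝ) → ℝ}

lemma add (hf : IsSemialgebraicFun f) (hg : IsSemialgebraicFun g) :
    IsSemialgebraicFun fun x => f x + g x := by
  convert (eval (X true + X false : MvPolynomial Bool ℝ)).comp
    (f := fun b x => bif b then f x else g x) (Bool.forall_bool.2 ⟨hg, hf⟩) using 2
  simp

lemma mul (hf : IsSemialgebraicFun f) (hg : IsSemialgebraicFun g) :
    IsSemialgebraicFun fun x => f x * g x := by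
  convert (eval (X true * X false : MvPolynomial Bool ℝ)).comp
    (f := fun b x => bif b then f x else g x) (Bool.forall_bool.2 ⟨hg, hf⟩) using 2
  simp

lemma pow (hf : IsSemialgebraicFun f) (n : ℕ) : IsSemialgebraicFun fun x => f x ^ n := by
  simpa using (eval (X () ^ n : MvPolynomial Unit ℝ)).comp fun _ => hf

lemma sum {f : κ → (ι → ℝ) → ℝ} (s : Finset κ) (hf : ∀ k, IsSemialgebraicFun (f k)) :
    IsSemialgebraicFun fun x => ∑ k ∈ s, f k x := by
  classical
  induction s using Finset.induction_on with
  | empty => simpa using const 0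
  | insert k s hk ih => simpa only [Finset.sum_insert hk] using (hf k).add ih

lemma prod {f : κ → (ι → ℝ) → ℝ} (s : Finset κ) (hf : ∀ k, IsSemialgebraicFun (f k)) :
    IsSemialgebraicFun fun x => ∏ k ∈ s, f k x := by
  classical
  induction s using Finset.induction_on with
  | empty => simpa using const 1
  | insert k s hk ih => simpa only [Finset.prod_insert hk] using (hf k).mul ih

lemma setOf_eq (hf : IsSemialgebraicFun f) (hg : IsSemialgebraicFun g) :
    IsSignDetermined {x | f x = g x} := by
  convert (IsSignDetermined.setOf_eval_eq_zero (X true - X false : MvPolynomial Bool ℝ)).preimage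
    (f := fun b x => bif b then f x else g x) (Bool.forall_bool.2 ⟨hg, hf⟩) using 3
  simp [sub_eq_zero]

lemma setOf_lt (hf : IsSemialgebraicFun f) (hg : IsSemialgebraicFun g) :
    IsSignDetermined {x | f x < g x} := by
  convert (IsSignDetermined.setOf_eval_pos (X true - X false : MvPolynomial Bool ℝ)).preimage
    (f := fun b x => bif b then g x else f x) (Bool.forall_bool.2 ⟨hf, hg⟩) using 3
  simp

lemma setOf_le (hf : IsSemialgebraicFun f) (hg : IsSemialgebraicFun g) :
    IsSignDetermined {x | f x ≤ g x} := by
  simpa only [Set.compl_ofPred, not_lt] using (hg.setOf_lt hf).compl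

lemma setOf_ne (hf : IsSemialgebraicFun f) (hg : IsSemialgebraicFun g) :
    IsSignDetermined {x | f x ≠ g x} :=
  (hf.setOf_eq hg).compl

lemma of_graph {P : (ι ⊕ Unit → ℝ) → Prop} (hP : IsSignDetermined {w | P w})
    (hf : ∀ w, P w ↔ w (.inr ()) = f fun i => w (.inl i)) : IsSemialgebraicFun f := by
  simpa only [IsSemialgebraicFun, ← hf] using hP

lemma inv (hf : IsSemialgebraicFun f) : IsSemialgebraicFun fun x => (f x)⁻¹ := by
  let y : (ι ⊕ Unit → ℝ) → ℝ := fun w => w (.inr ())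
  let s : (ι ⊕ Unit → ℝ) → ℝ := fun w => f fun i => w (.inl i)
  have hy : IsSemialgebraicFun y := coord (Sum.inr ())
  have hs : IsSemialgebraicFun s := hf.reindex Sum.inl
  -- These two equations determine the inverse even where `s` vanishes and `s⁻¹ = 0`.
  refine of_graph (((hs.mul (hs.mul hy)).setOf_eq hs).inter
    ((hy.mul (hy.mul hs)).setOf_eq hy)) fun w => ⟨fun ⟨h1, h2⟩ => ?_, fun h => ?_⟩
  · change s w * (s w * y w) = s w at h1
    change y w * (y w * s w) = y w at h2
    change y w = (s w)⁻¹
    rcases eq_or_ne (s w) 0 with h0 | h0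
    · rw [h0, _root_.inv_zero]
      simpa [h0, eq_comm] using h2
    · exact eq_inv_of_mul_eq_one_right (by simpa [h0] using h1)
  · change s w * (s w * y w) = s w ∧ y w * (y w * s w) = y w
    rw [show y w = (s w)⁻¹ from h]
    rcases eq_or_ne (s w) 0 with h0 | h0 <;> simp [h0]

lemma div (hf : IsSemialgebraicFun f) (hg : IsSemialgebraicFun g) :
    IsSemialgebraicFun fun x => f x / g x := by
  simpa only [div_eq_mul_inv] using hf.mul hg.inv

lemma rpow_ratCast (hf : IsSemialgebraicFun f) (hf0 : ∀ x, 0 ≤ f x) {q : ℚ} (hq : 0 ≤ q) :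
    IsSemialgebraicFun fun x => f x ^ (q : ℝ) := by
  have hy : IsSemialgebraicFun fun w : ι ⊕ Unit → ℝ => w (.inr ()) := coord _
  refine of_graph (((const 0).setOf_le hy).inter
    ((hy.pow q.den).setOf_eq ((hf.reindex Sum.inl).pow q.num.toNat))) fun w => ?_
  have hden : q.den ≠ 0 := q.den_nz
  set s := f fun i => w (.inl i)
  have hs : 0 ≤ s := hf0 _
  have hpow : (s ^ (q : ℝ)) ^ q.den = s ^ q.num.toNat := by
    have hnum : (q : ℝ) * q.den = q.num.toNat := by
      have : (q.num.toNat : ℤ) = q.num := Int.toNat_of_nonneg (Rat.num_nonneg.2 hq)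
      exact_mod_cast (Rat.mul_den_eq_num q).trans (by exact_mod_cast this.symm)
    rw [← Real.rpow_natCast, ← Real.rpow_mul hs, hnum, Real.rpow_natCast]
  constructor
  · rintro ⟨h0, h⟩
    exact (pow_left_inj₀ h0 (Real.rpow_nonneg hs _) hden).1 (h.trans hpow.symm)
  · intro h
    change 0 ≤ w (.inr ()) ∧ w (.inr ()) ^ q.den = s ^ q.num.toNat
    rw [h]
    exact ⟨Real.rpow_nonneg hs _, hpow⟩

lemma sInf {T : (ι → ℝ) → Set ℝ}
    (hT : IsSignDetermined {w : ι ⊕ Unit → ℝ | w (.inr ()) ∈ T fun i => w (.inl i)})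
    (hne : ∀ x, (T x).Nonempty) (hbdd : ∀ x, BddBelow (T x)) :
    IsSemialgebraicFun fun x => sInf (T x) := by
  have hlower : IsSignDetermined
      {w : ι ⊕ Unit → ℝ | w (.inr ()) ∈ lowerBounds (T fun i => w (.inl i))} := by
    have h : IsSignDetermined {w : ι ⊕ Unit → ℝ |
        ∀ r : Unit → ℝ, r () ∈ T (fun i => w (.inl i)) → w (.inr ()) ≤ r ()} :=
      .setOf_forall_fun <| .imp (hT.reindex (Sum.map Sum.inl id))
        ((coord (Sum.inl (Sum.inr ()))).setOf_le (coord (Sum.inr ())))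
    convert h using 1
    ext w
    exact ⟨fun hw r hr => hw hr, fun hw r hr => hw (fun _ => r) hr⟩
  have hgreatest : IsSignDetermined {w : ι ⊕ Unit → ℝ | ∀ b : Unit → ℝ,
      b () ∈ lowerBounds (T fun i => w (.inl i)) → b () ≤ w (.inr ())} :=
    .setOf_forall_fun <| .imp (hlower.reindex (Sum.map Sum.inl id))
      ((coord (Sum.inr ())).setOf_le (coord (Sum.inl (Sum.inr ()))))
  refine of_graph (hlower.inter hgreatest) fun w => ?_
  have hglb := isGLB_csInf (hne fun i => w (.inl i)) (hbdd _)
  constructor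
  · exact fun ⟨hl, hg⟩ => IsGLB.unique ⟨hl, fun b hb => hg (fun _ => b) hb⟩ hglb
  · intro h
    rw [← h] at hglb
    exact ⟨hglb.1, fun b hb => hglb.2 hb⟩

end IsSemialgebraicFun

/-- Matrix-valued functions all of whose entries are semialgebraic. -/
def IsSemialgebraicMatrixFun {α β : Type*} (M : (ι → ℝ) → Matrix α β ℝ) : Prop :=
  ∀ a b, IsSemialgebraicFun fun x => M x a b

namespace IsSemialgebraicMatrixFun

variable {α β γ : Type*}

lemma transpose {M : (ι → ℝ) → Matrix α β ℝ} (hM : IsSemialgebraicMatrixFun M) :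
    IsSemialgebraicMatrixFun fun x => (M x)ᵀ :=
  fun a b => hM b a

lemma mul [Fintype β] {M : (ι → ℝ) → Matrix α β ℝ} {N : (ι → ℝ) → Matrix β γ ℝ}
    (hM : IsSemialgebraicMatrixFun M) (hN : IsSemialgebraicMatrixFun N) :
    IsSemialgebraicMatrixFun fun x => M x * N x := fun a c => by
  simpa only [Matrix.mul_apply] using
    IsSemialgebraicFun.sum Finset.univ fun b => (hM a b).mul (hN b c)

lemma const_smul {M : (ι → ℝ) → Matrix α β ℝ} (hM : IsSemialgebraicMatrixFun M) (c : ℝ) :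
    IsSemialgebraicMatrixFun fun x => c • M x :=
  fun a b => (IsSemialgebraicFun.const c).mul (hM a b)

lemma sum {M : κ → (ι → ℝ) → Matrix α β ℝ} (s : Finset κ)
    (hM : ∀ k, IsSemialgebraicMatrixFun (M k)) :
    IsSemialgebraicMatrixFun fun x => ∑ k ∈ s, M k x := fun a b => by
  simpa only [Matrix.sum_apply] using IsSemialgebraicFun.sum s fun k => hM k a b

lemma det [Fintype α] [DecidableEq α] {M : (ι → ℝ) → Matrix α α ℝ}
    (hM : IsSemialgebraicMatrixFun M) : IsSemialgebraicFun fun x => (M x).det := by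
  simpa only [Matrix.det_apply'] using .sum Finset.univ fun σ =>
    (IsSemialgebraicFun.const _).mul (.prod Finset.univ fun a => hM (σ a) a)

end IsSemialgebraicMatrixFun

end SemialgebraicFun

section Capacity

/-! ### The capacity functional -/

open scoped MatrixOrder

lemma posDef_iff_exists_isUnit_transpose_mul_self {κ : Type*} [Fintype κ] [DecidableEq κ]
    {Y : Matrix κ κ ℝ} : Y.PosDef ↔ ∃ h, IsUnit h ∧ Y = hᵀ * h := by
  rw [← isStrictlyPositive_iff_posDef, CStarAlgebra.isStrictlyPositive_iff_eq_star_mul_self]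
  simp only [star_eq_conjTranspose, conjTranspose_eq_transpose_of_trivial]

/-- Quiver data with vertex dimensions `d i`, `n j` and `A i j` arrows from `i` to `j`. -/
abbrev QuiverDatum {k m : ℕ} (d : Fin k → ℕ) (n : Fin m → ℕ) (A : Fin k → Fin m → ℕ) : Type :=
  ∀ i : Fin k, ∀ j : Fin m, Fin (A i j) → Matrix (Fin (n j)) (Fin (d i)) ℝ

variable {k m : ℕ} {d : Fin k → ℕ} {n : Fin m → ℕ} {A : Fin k → Fin m → ℕ} {p : Fin m → ℝ}

/-- The `i`-th component of the operator `Y ↦ (∑ⱼ pⱼ ∑ₐ Vₐᵀ Yⱼ Vₐ)ᵢ` of a quiver datum, whose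
determinants form the numerator of the capacity functional. -/
noncomputable def quiverOperator (p : Fin m → ℝ) (V : QuiverDatum d n A)
    (Y : ∀ j, Matrix (Fin (n j)) (Fin (n j)) ℝ) (i : Fin k) :
    Matrix (Fin (d i)) (Fin (d i)) ℝ :=
  ∑ j, p j • ∑ a, (V i j a)ᵀ * Y j * V i j a

lemma capVal_eq_prod_det_quiverOperator_div (p : Fin m → ℝ) (V : QuiverDatum d n A)
    (Y : ∀ j, Matrix (Fin (n j)) (Fin (n j)) ℝ) :
    capVal p V Y = (∏ i, (quiverOperator p V Y i).det) / ∏ j, (Y j).det ^ p j :=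
  rfl

section Bounds

variable {V : QuiverDatum d n A} {Y : ∀ j, Matrix (Fin (n j)) (Fin (n j)) ℝ}

lemma posSemidef_quiverOperator (hp : ∀ j, 0 ≤ p j) (V : QuiverDatum d n A)
    (hY : ∀ j, (Y j).PosSemidef) (i : Fin k) : (quiverOperator p V Y i).PosSemidef :=
  posSemidef_sum _ fun j _ => .smul (posSemidef_sum _ fun a _ => by
    simpa only [conjTranspose_eq_transpose_of_trivial] using
      (hY j).conjTranspose_mul_mul_same (V i j a)) (hp j)

lemma capVal_nonneg (hp : ∀ j, 0 ≤ p j) (V : QuiverDatum d n A) (hY : ∀ j, (Y j).PosSemidef) :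
    0 ≤ capVal p V Y :=
  div_nonneg (Finset.prod_nonneg fun i _ => (posSemidef_quiverOperator hp V hY i).det_nonneg)
    (Finset.prod_nonneg fun j _ => Real.rpow_nonneg (hY j).det_nonneg _)

lemma cap_le_capVal (hp : ∀ j, 0 ≤ p j) (V : QuiverDatum d n A) (hY : ∀ j, (Y j).PosDef) :
    cap p V ≤ capVal p V Y := by
  refine csInf_le ⟨0, ?_⟩ ⟨Y, hY, rfl⟩
  rintro _ ⟨Z, hZ, rfl⟩
  exact capVal_nonneg hp V fun j => (hZ j).posSemidef

lemma le_cap {c : ℝ} (h : ∀ Y : ∀ j, Matrix (Fin (n j)) (Fin (n j)) ℝ,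
    (∀ j, (Y j).PosDef) → c ≤ capVal p V Y) : c ≤ cap p V := by
  refine le_csInf ⟨_, fun _ => 1, fun _ => .one, rfl⟩ ?_
  rintro _ ⟨Y, hY, rfl⟩
  exact h Y hY

lemma posDef_quiverOperator (hp : ∀ j, 0 ≤ p j) (hV : 0 < cap p V) (hY : ∀ j, (Y j).PosDef)
    (i : Fin k) : (quiverOperator p V Y i).PosDef := by
  rw [(posSemidef_quiverOperator hp V (fun j => (hY j).posSemidef) i).posDef_iff_det_ne_zero]
  intro h
  have hpos := hV.trans_le (cap_le_capVal hp V hY)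
  rw [capVal_eq_prod_det_quiverOperator_div, Finset.prod_eq_zero (Finset.mem_univ i) h,
    zero_div] at hpos
  exact hpos.false

end Bounds

section Twist

/-- The action `Vₐ ↦ hⱼ Vₐ gᵢ` of tuples of square matrices on quiver data. -/
def twist (h : ∀ j, Matrix (Fin (n j)) (Fin (n j)) ℝ) (V : QuiverDatum d n A)
    (g : ∀ i, Matrix (Fin (d i)) (Fin (d i)) ℝ) : QuiverDatum d n A :=
  fun i j a => h j * V i j a * g i

lemma quiverOperator_twist (p : Fin m → ℝ) (h : ∀ j, Matrix (Fin (n j)) (Fin (n j)) ℝ)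
    (V : QuiverDatum d n A) (g : ∀ i, Matrix (Fin (d i)) (Fin (d i)) ℝ)
    (Y : ∀ j, Matrix (Fin (n j)) (Fin (n j)) ℝ) (i : Fin k) :
    quiverOperator p (twist h V g) Y i =
      (g i)ᵀ * quiverOperator p V (fun j => (h j)ᵀ * Y j * h j) i * g i := by
  simp only [quiverOperator, twist, Matrix.mul_sum, Matrix.sum_mul, Matrix.mul_smul,
    Matrix.smul_mul, transpose_mul, Matrix.mul_assoc]

/-- The factor by which twisting by `h` and `g` changes the capacity functional. -/
noncomputable def twistFactor (p : Fin m → ℝ) (h : ∀ j, Matrix (Fin (n j)) (Fin (n j)) ℝ)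
    (g : ∀ i, Matrix (Fin (d i)) (Fin (d i)) ℝ) : ℝ :=
  (∏ i, (g i).det ^ 2) * ∏ j, ((h j).det ^ 2) ^ p j

lemma twistFactor_nonneg (p : Fin m → ℝ) (h : ∀ j, Matrix (Fin (n j)) (Fin (n j)) ℝ)
    (g : ∀ i, Matrix (Fin (d i)) (Fin (d i)) ℝ) : 0 ≤ twistFactor p h g := by
  unfold twistFactor
  positivity

variable {h : ∀ j, Matrix (Fin (n j)) (Fin (n j)) ℝ}

lemma capVal_twist (p : Fin m → ℝ) (hh : ∀ j, IsUnit (h j)) (V : QuiverDatum d n A)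
    (g : ∀ i, Matrix (Fin (d i)) (Fin (d i)) ℝ) {Y : ∀ j, Matrix (Fin (n j)) (Fin (n j)) ℝ}
    (hY : ∀ j, (Y j).PosSemidef) :
    capVal p (twist h V g) Y =
      twistFactor p h g * capVal p V fun j => (h j)ᵀ * Y j * h j := by
  have hnum : ∏ i, (quiverOperator p (twist h V g) Y i).det = (∏ i, (g i).det ^ 2) *
      ∏ i, (quiverOperator p V (fun j => (h j)ᵀ * Y j * h j) i).det := by
    rw [← Finset.prod_mul_distrib]
    refine Finset.prod_congr rfl fun i _ => ?_
    rw [quiverOperator_twist, det_mul, det_mul, det_transpose]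
    ring
  have hden : ∏ j, ((h j)ᵀ * Y j * h j).det ^ p j =
      (∏ j, ((h j).det ^ 2) ^ p j) * ∏ j, (Y j).det ^ p j := by
    rw [← Finset.prod_mul_distrib]
    refine Finset.prod_congr rfl fun j _ => ?_
    rw [← Real.mul_rpow (sq_nonneg _) (hY j).det_nonneg, det_mul, det_mul, det_transpose]
    ring_nf
  have hdet : ∏ j, ((h j).det ^ 2) ^ p j ≠ 0 := Finset.prod_ne_zero_iff.2 fun j _ =>
    (Real.rpow_pos_of_pos (sq_pos_of_ne_zero ((isUnit_iff_isUnit_det _).1 (hh j)).ne_zero) _).ne'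
  rw [capVal_eq_prod_det_quiverOperator_div, capVal_eq_prod_det_quiverOperator_div, hnum, hden,
    twistFactor, mul_assoc, ← mul_div_assoc, mul_div_mul_left _ _ hdet, mul_div_assoc]

lemma twistFactor_mul_cap_le (hp : ∀ j, 0 ≤ p j) (hh : ∀ j, IsUnit (h j))
    (V : QuiverDatum d n A) (g : ∀ i, Matrix (Fin (d i)) (Fin (d i)) ℝ) :
    twistFactor p h g * cap p V ≤ cap p (twist h V g) := by
  refine le_cap fun Y hY => ?_
  rw [capVal_twist p hh V g fun j => (hY j).posSemidef]
  refine mul_le_mul_of_nonneg_left (cap_le_capVal hp V fun j => ?_) (twistFactor_nonneg p h g)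
  exact (hh j).posDef_star_left_conjugate_iff.2 (hY j)

end Twist

section RightNormalized

/-- Quiver data whose operator is unital, i.e. maps the identity tuple to the identity tuple. -/
def IsRightNormalized (p : Fin m → ℝ) (V : QuiverDatum d n A) : Prop :=
  ∀ i, quiverOperator p V (fun _ => 1) i = 1

lemma IsRightNormalized.capVal_one {V : QuiverDatum d n A} (hV : IsRightNormalized p V) :
    (capVal p V fun _ => 1) = 1 := by
  simp [capVal_eq_prod_det_quiverOperator_div, hV _]

lemma exists_isRightNormalized_cap_le_mul (hp : ∀ j, 0 ≤ p j) {V : QuiverDatum d n A}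
    (hV : 0 < cap p V) {Y : ∀ j, Matrix (Fin (n j)) (Fin (n j)) ℝ} (hY : ∀ j, (Y j).PosDef) :
    ∃ W : QuiverDatum d n A, IsRightNormalized p W ∧ cap p V ≤ capVal p V Y * cap p W := by
  choose h hh hYh using fun j => posDef_iff_exists_isUnit_transpose_mul_self.1 (hY j)
  choose g hg hVg using fun i =>
    posDef_iff_exists_isUnit_transpose_mul_self.1 (posDef_quiverOperator hp hV hY i)
  have hYh' : (fun j => (h j)ᵀ * 1 * h j) = Y := funext fun j => by rw [mul_one, hYh]
  have hW : IsRightNormalized p (twist h V fun i => (g i)⁻¹) := fun i => by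
    have hdet := (isUnit_iff_isUnit_det _).1 (hg i)
    rw [quiverOperator_twist, hYh', hVg, ← mul_assoc, ← transpose_mul, mul_nonsing_inv _ hdet,
      transpose_one, one_mul, mul_nonsing_inv _ hdet]
  have hfactor : twistFactor p h (fun i => (g i)⁻¹) * capVal p V Y = 1 := by
    rw [← hW.capVal_one, capVal_twist p hh V _ fun _ => .one, hYh']
  refine ⟨_, hW, ?_⟩
  calc cap p V = capVal p V Y * (twistFactor p h (fun i => (g i)⁻¹) * cap p V) := by
        rw [← mul_assoc, mul_comm (capVal p V Y), hfactor, one_mul]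
    _ ≤ _ := mul_le_mul_of_nonneg_left (twistFactor_mul_cap_le hp hh V _)
        (capVal_nonneg hp V fun j => (hY j).posSemidef)

lemma continuous_quiverOperator (p : Fin m → ℝ) (Y : ∀ j, Matrix (Fin (n j)) (Fin (n j)) ℝ)
    (i : Fin k) : Continuous fun V : QuiverDatum d n A => quiverOperator p V Y i := by
  unfold quiverOperator
  fun_prop

lemma continuous_capVal (p : Fin m → ℝ) (Y : ∀ j, Matrix (Fin (n j)) (Fin (n j)) ℝ) :
    Continuous fun V : QuiverDatum d n A => capVal p V Y :=
  (continuous_finsetProd _ fun i _ => (continuous_quiverOperator p Y i).matrix_det).div_const _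

lemma upperSemicontinuous_cap (hp : ∀ j, 0 ≤ p j) :
    UpperSemicontinuous fun V : QuiverDatum d n A => cap p V := by
  intro V c hc
  have hne : {r | ∃ Y : ∀ j, Matrix (Fin (n j)) (Fin (n j)) ℝ,
      (∀ j, (Y j).PosDef) ∧ r = capVal p V Y}.Nonempty := ⟨_, fun _ => 1, fun _ => .one, rfl⟩
  obtain ⟨_, ⟨Y, hY, rfl⟩, hlt⟩ := exists_lt_of_csInf_lt hne hc
  filter_upwards [(continuous_capVal p Y).continuousAt.eventually_lt_const hlt] with W hW
  exact (cap_le_capVal hp W hY).trans_lt hW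

lemma IsRightNormalized.abs_apply_le (hp : ∀ j, 0 < p j) {V : QuiverDatum d n A}
    (hV : IsRightNormalized p V) (i : Fin k) (j : Fin m) (a : Fin (A i j)) (r : Fin (n j))
    (c : Fin (d i)) : |V i j a r c| ≤ √(1 / p j) := by
  have hsum : ∑ j, p j * ∑ a, ∑ r, V i j a r c ^ 2 = 1 := by
    simpa [quiverOperator, Matrix.sum_apply, Matrix.mul_apply, sq] using
      congrFun (congrFun (hV i) c) c
  have hp' (j : Fin m) : 0 ≤ p j := (hp j).le
  refine Real.abs_le_sqrt ((le_div_iff₀' (hp j)).2 ?_)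
  calc p j * V i j a r c ^ 2 ≤ p j * ∑ a, ∑ r, V i j a r c ^ 2 := by
        refine mul_le_mul_of_nonneg_left ?_ (hp' j)
        calc V i j a r c ^ 2 ≤ ∑ r, V i j a r c ^ 2 :=
              Finset.single_le_sum (f := fun r => V i j a r c ^ 2)
                (fun _ _ => by positivity) (Finset.mem_univ r)
          _ ≤ _ := Finset.single_le_sum (f := fun a => ∑ r, V i j a r c ^ 2)
                (fun _ _ => by positivity) (Finset.mem_univ a)
    _ ≤ ∑ j, p j * ∑ a, ∑ r, V i j a r c ^ 2 :=
        Finset.single_le_sum (f := fun j => p j * ∑ a, ∑ r, V i j a r c ^ 2)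
          (fun j _ => mul_nonneg (hp' j) (by positivity)) (Finset.mem_univ j)
    _ = 1 := hsum

lemma isCompact_setOf_isRightNormalized (hp : ∀ j, 0 < p j) :
    IsCompact {V : QuiverDatum d n A | IsRightNormalized p V} := by
  have hclosed : IsClosed {V : QuiverDatum d n A | IsRightNormalized p V} := by
    simp only [IsRightNormalized, Set.ofPred_forall]
    exact isClosed_iInter fun i =>
      isClosed_eq (continuous_quiverOperator p _ i) continuous_const
  have hbox := isCompact_univ_pi fun i : Fin k => isCompact_univ_pi fun j : Fin m =>
    isCompact_univ_pi fun _ : Fin (A i j) => IsCompact.matrix (m := Fin (n j)) (n := Fin (d i))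
      (isCompact_Icc (a := -√(1 / p j)) (b := √(1 / p j)))
  exact hbox.of_isClosed_subset hclosed fun V hV i _ j _ a _ r c =>
    abs_le.1 (IsRightNormalized.abs_apply_le hp hV i j a r c)

/-- The maximum of the capacity over normalized data is attained. At a maximizer no
renormalization increases the capacity, which forces the infimum to be attained at `1`. -/
theorem exists_extremizable_cap_eq_one (hp : ∀ j, 0 < p j) {V : QuiverDatum d n A}
    (hV : 0 < cap p V) : ∃ W : QuiverDatum d n A, Extremizable p W ∧ cap p W = 1 := by
  have hp' (j : Fin m) : 0 ≤ p j := (hp j).le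
  obtain ⟨W₀, hW₀, hVW₀⟩ := exists_isRightNormalized_cap_le_mul hp' hV fun _ => .one
  have hW₀pos : 0 < cap p W₀ :=
    pos_of_mul_pos_right (hV.trans_le hVW₀) (capVal_nonneg hp' V fun _ => .one)
  obtain ⟨W, hW, hmax⟩ := UpperSemicontinuousOn.exists_isMaxOn ⟨W₀, hW₀⟩
    (isCompact_setOf_isRightNormalized hp) ((upperSemicontinuous_cap hp').upperSemicontinuousOn _)
  have hWpos : 0 < cap p W := hW₀pos.trans_le (hmax hW₀)
  have hone : cap p W = 1 := by
    refine le_antisymm ?_ (le_cap fun Y hY => ?_)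
    · exact (cap_le_capVal hp' W fun _ => .one).trans_eq (IsRightNormalized.capVal_one hW)
    · obtain ⟨U, hU, hWU⟩ := exists_isRightNormalized_cap_le_mul hp' hWpos hY
      refine (le_mul_iff_one_le_left hWpos).1 (hWU.trans ?_)
      exact mul_le_mul_of_nonneg_left (hmax hU)
        (capVal_nonneg hp' W fun j => (hY j).posSemidef)
  exact ⟨W, ⟨hWpos, fun _ => 1, fun _ => .one,
    (IsRightNormalized.capVal_one hW).trans hone.symm⟩, hone⟩

end RightNormalized

section Scaling

lemma capVal_smul (p : Fin m → ℝ) (t : ℝ) (V : QuiverDatum d n A)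
    (Y : ∀ j, Matrix (Fin (n j)) (Fin (n j)) ℝ) :
    capVal p (t • V) Y = t ^ (2 * ∑ i, d i) * capVal p V Y := by
  have hop (i : Fin k) : quiverOperator p (t • V) Y i = t ^ 2 • quiverOperator p V Y i := by
    simp only [quiverOperator, Pi.smul_apply, transpose_smul, Matrix.smul_mul, Matrix.mul_smul,
      smul_smul, ← sq, Finset.smul_sum, mul_comm]
  simp only [capVal_eq_prod_det_quiverOperator_div, hop, det_smul, Fintype.card_fin,
    Finset.prod_mul_distrib, Finset.prod_pow_eq_pow_sum, ← pow_mul, mul_div_assoc,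
    Finset.mul_sum]

lemma cap_smul (p : Fin m → ℝ) (t : ℝ) (V : QuiverDatum d n A) :
    cap p (t • V) = t ^ (2 * ∑ i, d i) * cap p V := by
  unfold cap
  rw [← smul_eq_mul, ← Real.sInf_smul_of_nonneg ((even_two_mul _).pow_nonneg t)]
  congr 1
  ext r
  simp only [Set.mem_smul_set, Set.mem_ofPred_eq, capVal_smul, smul_eq_mul]
  constructor
  · rintro ⟨Y, hY, rfl⟩
    exact ⟨_, ⟨Y, hY, rfl⟩, rfl⟩
  · rintro ⟨_, ⟨Y, hY, rfl⟩, rfl⟩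
    exact ⟨Y, hY, rfl⟩

lemma Extremizable.smul {V : QuiverDatum d n A} (hV : Extremizable p V) {t : ℝ} (ht : t ≠ 0) :
    Extremizable p (t • V) := by
  obtain ⟨hpos, Y, hY, hcap⟩ := hV
  refine ⟨?_, Y, hY, by rw [capVal_smul, cap_smul, hcap]⟩
  rw [cap_smul]
  exact mul_pos ((even_two_mul _).pow_pos ht) hpos

theorem exists_extremizable_cap_eq (hp : ∀ j, 0 < p j) {V : QuiverDatum d n A}
    (hV : 0 < cap p V) : ∃ W : QuiverDatum d n A, Extremizable p W ∧ cap p W = cap p V := by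
  obtain ⟨W, hW, hone⟩ := exists_extremizable_cap_eq_one hp hV
  rcases eq_or_ne (∑ i, d i) 0 with hd | hd
  · obtain rfl : W = V := by
      ext i j a r c
      have : d i = 0 := Finset.sum_eq_zero_iff.1 hd i (Finset.mem_univ i)
      exact (c.cast this).elim0
    exact ⟨W, hW, rfl⟩
  · have hd' : 2 * ∑ i, d i ≠ 0 := mul_ne_zero two_ne_zero hd
    let t := cap p V ^ ((2 * ∑ i, d i : ℕ) : ℝ)⁻¹
    refine ⟨t • W, hW.smul (Real.rpow_pos_of_pos hV _).ne', ?_⟩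
    rw [cap_smul, hone, mul_one, Real.rpow_inv_natCast_pow hV.le hd']

end Scaling

end Capacity

section CapacitySemialgebraic

/-! ### Semialgebraicity of the capacity -/

variable {k m : ℕ} {d : Fin k → ℕ} {n : Fin m → ℕ} {A : Fin k → Fin m → ℕ} {ι κ : Type*}

/-- A tuple of Gram matrices `hⱼᵀ hⱼ` in terms of the entries of `h`. Over invertible `h`, these
parametrize the tuples of positive definite matrices by polynomials. -/
def gramTuple (h : (j : Fin m) × Fin (n j) × Fin (n j) → ℝ) (j : Fin m) :
    Matrix (Fin (n j)) (Fin (n j)) ℝ :=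
  (of fun r c => h ⟨j, r, c⟩)ᵀ * of fun r c => h ⟨j, r, c⟩

lemma det_gramTuple_nonneg (h : (j : Fin m) × Fin (n j) × Fin (n j) → ℝ) (j : Fin m) :
    0 ≤ (gramTuple h j).det := by
  rw [gramTuple, det_mul, det_transpose]
  exact mul_self_nonneg _

lemma exists_posDef_iff_exists_gramTuple {P : (∀ j, Matrix (Fin (n j)) (Fin (n j)) ℝ) → Prop} :
    (∃ Y, (∀ j, (Y j).PosDef) ∧ P Y) ↔ ∃ h, (∀ j, (gramTuple h j).det ≠ 0) ∧ P (gramTuple h) := by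
  constructor
  · rintro ⟨Y, hY, hP⟩
    choose h _ hYh using fun j => posDef_iff_exists_isUnit_transpose_mul_self.1 (hY j)
    obtain rfl : Y = gramTuple fun q => h q.1 q.2.1 q.2.2 := funext hYh
    exact ⟨_, fun j => (hY j).det_pos.ne', hP⟩
  · rintro ⟨h, hh, hP⟩
    refine ⟨_, fun j => posDef_iff_exists_isUnit_transpose_mul_self.2 ⟨_, ?_, rfl⟩, hP⟩
    refine (isUnit_iff_isUnit_det _).2 (isUnit_iff_ne_zero.2 fun h0 => hh j ?_)
    rw [gramTuple, det_mul, h0, mul_zero]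

lemma isSemialgebraicMatrixFun_gramTuple (e : (j : Fin m) × Fin (n j) × Fin (n j) → ι)
    (j : Fin m) : IsSemialgebraicMatrixFun fun x : ι → ℝ => gramTuple (fun q => x (e q)) j := by
  have hentries : IsSemialgebraicMatrixFun fun x : ι → ℝ => of fun r c => x (e ⟨j, r, c⟩) :=
    fun r c => .coord (e ⟨j, r, c⟩)
  exact hentries.transpose.mul hentries

lemma IsSignDetermined.setOf_exists_posDef
    {P : (ι → ℝ) → (∀ j, Matrix (Fin (n j)) (Fin (n j)) ℝ) → Prop}
    (hP : IsSignDetermined {w : ι ⊕ ((j : Fin m) × Fin (n j) × Fin (n j)) → ℝ |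
      P (fun i => w (.inl i)) (gramTuple fun q => w (.inr q))}) :
    IsSignDetermined {x | ∃ Y, (∀ j, (Y j).PosDef) ∧ P x Y} := by
  simp only [exists_posDef_iff_exists_gramTuple]
  refine .setOf_exists (.inter (.setOf_forall fun j => ?_) hP)
  exact (isSemialgebraicMatrixFun_gramTuple Sum.inr j).det.setOf_ne (.const 0)

/-- Quiver data depending semialgebraically, entry by entry, on a parameter. -/
def IsSemialgebraicDatumFun (V : (ι → ℝ) → QuiverDatum d n A) : Prop :=
  ∀ i j a, IsSemialgebraicMatrixFun fun x => V x i j a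

lemma IsSemialgebraicDatumFun.reindex {V : (κ → ℝ) → QuiverDatum d n A}
    (hV : IsSemialgebraicDatumFun V) (e : κ → ι) :
    IsSemialgebraicDatumFun fun x : ι → ℝ => V fun k => x (e k) :=
  fun i j a r c => (hV i j a r c).reindex e

variable {p : Fin m → ℚ} {V : (ι → ℝ) → QuiverDatum d n A}

lemma isSemialgebraicFun_capVal (hp : ∀ j, 0 ≤ p j) (hV : IsSemialgebraicDatumFun V)
    {Y : (ι → ℝ) → ∀ j, Matrix (Fin (n j)) (Fin (n j)) ℝ}
    (hY : ∀ j, IsSemialgebraicMatrixFun fun x => Y x j) (hY0 : ∀ x j, 0 ≤ (Y x j).det) :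
    IsSemialgebraicFun fun x => capVal (fun j => (p j : ℝ)) (V x) (Y x) := by
  have hoperator (i : Fin k) :
      IsSemialgebraicMatrixFun fun x => quiverOperator (fun j => (p j : ℝ)) (V x) (Y x) i :=
    .sum _ fun j => .const_smul (.sum _ fun a => ((hV i j a).transpose.mul (hY j)).mul (hV i j a)) _
  exact .div (.prod _ fun i => (hoperator i).det)
    (.prod _ fun j => (hY j).det.rpow_ratCast (hY0 · j) (hp j))

lemma isSemialgebraicFun_capVal_gramTuple (hp : ∀ j, 0 ≤ p j) (hV : IsSemialgebraicDatumFun V) :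
    IsSemialgebraicFun fun w : ι ⊕ ((j : Fin m) × Fin (n j) × Fin (n j)) → ℝ =>
      capVal (fun j => (p j : ℝ)) (V fun i => w (.inl i)) (gramTuple fun q => w (.inr q)) :=
  isSemialgebraicFun_capVal hp (hV.reindex Sum.inl)
    (isSemialgebraicMatrixFun_gramTuple Sum.inr) fun _ => det_gramTuple_nonneg _

lemma isSignDetermined_setOf_exists_eq_capVal (hp : ∀ j, 0 ≤ p j) (hV : IsSemialgebraicDatumFun V)
    {f : (ι → ℝ) → ℝ} (hf : IsSemialgebraicFun f) :
    IsSignDetermined {x | ∃ Y : ∀ j, Matrix (Fin (n j)) (Fin (n j)) ℝ, (∀ j, (Y j).PosDef) ∧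
      f x = capVal (fun j => (p j : ℝ)) (V x) Y} :=
  .setOf_exists_posDef (P := fun x Y => f x = capVal (fun j => (p j : ℝ)) (V x) Y) <|
    (hf.reindex Sum.inl).setOf_eq (isSemialgebraicFun_capVal_gramTuple hp hV)

lemma isSemialgebraicFun_cap (hp : ∀ j, 0 ≤ p j) (hV : IsSemialgebraicDatumFun V) :
    IsSemialgebraicFun fun x => cap (fun j => (p j : ℝ)) (V x) := by
  refine .sInf ?_ (fun x => ⟨_, fun _ => 1, fun _ => .one, rfl⟩) fun x => ⟨0, ?_⟩
  · exact isSignDetermined_setOf_exists_eq_capVal hp (hV.reindex Sum.inl) (.coord (Sum.inr ()))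
  · rintro _ ⟨Y, hY, rfl⟩
    exact capVal_nonneg (fun j => by exact_mod_cast hp j) _ fun j => (hY j).posSemidef

lemma isSignDetermined_setOf_extremizable (hp : ∀ j, 0 ≤ p j) (hV : IsSemialgebraicDatumFun V) :
    IsSignDetermined {x | Extremizable (fun j => (p j : ℝ)) (V x)} := by
  have hcap := isSemialgebraicFun_cap hp hV
  have hattained := isSignDetermined_setOf_exists_eq_capVal hp hV hcap
  simpa only [Extremizable, eq_comm, Set.ofPred_and] using
    ((IsSemialgebraicFun.const 0).setOf_lt hcap).inter hattained

lemma isSemialgebraicDatumFun_toDatum (e : QIdx k m d n A → ι) :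
    IsSemialgebraicDatumFun fun x : ι → ℝ => toDatum fun q => x (e q) :=
  fun i j a r c => .coord (e ⟨i, j, a, r, c⟩)

lemma toDatum_surjective : Function.Surjective
    (toDatum : (QIdx k m d n A → ℝ) → QuiverDatum d n A) :=
  fun W => ⟨fun q => W q.1 q.2.1 q.2.2.1 q.2.2.2.1 q.2.2.2.2, rfl⟩

end CapacitySemialgebraic

/-- Assume the weights are positive rationals. Then there exists a
semi-algebraic set `𝒴 ⊆ ℝ^{D₁} × ℝ^{D₁}` such that for every `(V, V') ∈ 𝒴` one has
`cap(V, p) = cap(V', p)` and `(V', p)` is extremizable, and such that the feasible set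
`𝒮` equals `π₁(𝒴)`. -/
theorem exists_semialgebraic_reduction_family {k m : ℕ} (hk : 0 < k) (hm : 0 < m)
    {d : Fin k → ℕ} {n : Fin m → ℕ} {A : Fin k → Fin m → ℕ} (p : Fin m → ℚ)
    (hd : ∀ i, 0 < d i) (hn : ∀ j, 0 < n j) (hp : ∀ j, 0 < p j)
    (hbal : ∑ i : Fin k, (d i : ℝ) = ∑ j : Fin m, (p j : ℝ) * (n j : ℝ)) :
    ∃ Y : Set ((QIdx k m d n A ⊕ QIdx k m d n A) → ℝ),
      IsSemialgebraic Y ∧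
      (∀ z ∈ Y,
        cap (fun j => (p j : ℝ)) (toDatum fun q => z (Sum.inl q)) =
          cap (fun j => (p j : ℝ)) (toDatum fun q => z (Sum.inr q)) ∧
        Extremizable (fun j => (p j : ℝ)) (toDatum fun q => z (Sum.inr q))) ∧
      { x : QIdx k m d n A → ℝ | 0 < cap (fun j => (p j : ℝ)) (toDatum x) } =
        (fun z (q : QIdx k m d n A) => z (Sum.inl q)) '' Y := by
  have hp' (j : Fin m) : 0 ≤ p j := (hp j).le
  refine ⟨{z | cap (fun j => (p j : ℝ)) (toDatum fun q => z (Sum.inl q)) =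
      cap (fun j => (p j : ℝ)) (toDatum fun q => z (Sum.inr q)) ∧
    Extremizable (fun j => (p j : ℝ)) (toDatum fun q => z (Sum.inr q))}, ?_, fun z hz => hz, ?_⟩
  · refine (IsSignDetermined.inter ?_ ?_).isSemialgebraic
    · exact (isSemialgebraicFun_cap hp' (isSemialgebraicDatumFun_toDatum _)).setOf_eq
        (isSemialgebraicFun_cap hp' (isSemialgebraicDatumFun_toDatum _))
    · exact isSignDetermined_setOf_extremizable hp' (isSemialgebraicDatumFun_toDatum _)
  · ext x
    constructor
    · intro hx
      obtain ⟨W, hW, hcap⟩ := exists_extremizable_cap_eq (fun j => Rat.cast_pos.2 (hp j)) hx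
      obtain ⟨y, rfl⟩ := toDatum_surjective W
      exact ⟨Sum.elim x y, ⟨hcap.symm, hW⟩, rfl⟩
    · rintro ⟨z, ⟨hcap, hextr⟩, rfl⟩
      exact hextr.1.trans_eq hcap.symm
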